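/- Type-counting stability bound: for a permutation-invariant family of channels (N^{(s)}) on inputs indexed by sequences s ∈ Z^n over an alphabet Z of size |Z| (i.e., N^{(s)}(ρ_s) depends only on the type of s), the Holevo information between the input S and the output satisfies I[S; B] ≤ (|Z| − 1) ln(n + 1). -/

import Mathlib

open Matrix
open scoped ComplexOrder

variable {d : Type*} [Fintype d] [DecidableEq d]

/-- Apply a real function to a Hermitian matrix via the spectral theorem
(junk value `0` for non-Hermitian matrices). -/
noncomputable def matFun (f : ℝ → ℝ) (A : Matrix d d ℂ) : Matrix d d ℂ :=
  if hA : A.IsHermitian then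
    (hA.eigenvectorUnitary : Matrix d d ℂ) *
      Matrix.diagonal (fun i => (f (hA.eigenvalues i) : ℂ)) *
      (star (hA.eigenvectorUnitary : Matrix d d ℂ))
  else 0

/-- Matrix logarithm (via spectral calculus, with `Real.log 0 = 0` on the kernel). -/
noncomputable def mlog (A : Matrix d d ℂ) : Matrix d d ℂ := matFun Real.log A

/-- Quantum (Umegaki) relative entropy `D(ρ‖σ) = Tr[ρ(log ρ − log σ)]`. -/
noncomputable def qRelEnt (ρ σ : Matrix d d ℂ) : ℝ :=
  (Matrix.trace (ρ * (mlog ρ - mlog σ))).re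

/-- `ρ` is a density operator. -/
def IsDensity (ρ : Matrix d d ℂ) : Prop := ρ.PosSemidef ∧ Matrix.trace ρ = 1

/-- `supp ρ ⊆ supp σ`, stated as `ker σ ⊆ ker ρ`. -/
def SuppLE (ρ σ : Matrix d d ℂ) : Prop := ∀ v : d → ℂ, σ.mulVec v = 0 → ρ.mulVec v = 0

/-- Number of occurrences of the symbol `z` in the sequence `s` (entry of the type vector). -/
def typeCount {Z : Type*} [DecidableEq Z] {n : ℕ} (s : Fin n → Z) (z : Z) : ℕ :=
  (Finset.univ.filter fun i => s i = z).card

/-!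
If the output depends on the input only through a label `f s`, and `w t` is the probability of the
label `t`, then the average output dominates `w (f s) • out s`. The logarithm turns this domination
into `D(out s ‖ average) ≤ -log w (f s)`, so the Holevo information is at most the Shannon entropy
of the label, hence at most the logarithm of the number of labels. For sequences the label is the
type; since the counts sum to `n`, one of them is redundant, which leaves at most
`(n + 1) ^ (|Z| - 1)` labels.

The relative entropy bound is proved without operator monotonicity of the logarithm: for an
eigenvector `v` of `ρ` with eigenvalue `a`, testing `p ρ ≤ σ` on `σ⁻¹ v` (inverse on the support)
gives `p a ⟨v, σ⁻¹ v⟩ ≤ 1`, and `log x ≤ x - 1` on the spectrum of `σ` then gives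
`log (p a) ≤ ⟨v, log σ v⟩`.
-/

section Spectral

open scoped InnerProductSpace MatrixOrder

/-- The quadratic form `⟨x, A x⟩` of a matrix, real-valued by taking the real part. -/
noncomputable def quadForm (A : Matrix d d ℂ) (x : EuclideanSpace ℂ d) : ℝ :=
  (⟪x, toEuclideanLin A x⟫_ℂ).re

lemma quadForm_mono {A B : Matrix d d ℂ} (hAB : A ≤ B) (x : EuclideanSpace ℂ d) :
    quadForm A x ≤ quadForm B x := by
  have hnonneg := (isPositive_toEuclideanLin_iff.mpr (le_iff.mp hAB)).re_inner_nonneg_right x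
  simpa [quadForm, inner_sub_right] using hnonneg

lemma quadForm_smul (c : ℝ) (A : Matrix d d ℂ) (x : EuclideanSpace ℂ d) :
    quadForm (c • A) x = c * quadForm A x := by
  have hsmul : toEuclideanLin (c • A) x = (c : ℂ) • toEuclideanLin A x := by
    rw [← Complex.coe_smul, map_smul, LinearMap.smul_apply]
  rw [quadForm, hsmul, inner_smul_right, Complex.re_ofReal_mul, quadForm]

lemma matFun_id {A : Matrix d d ℂ} (hA : A.IsHermitian) : matFun id A = A := by
  conv_rhs => rw [hA.spectral_theorem]
  rw [matFun, dif_pos hA]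
  rfl

lemma inner_eigenvectorBasis_matFun {A : Matrix d d ℂ} (hA : A.IsHermitian) (f : ℝ → ℝ) (i : d)
    (x : EuclideanSpace ℂ d) :
    ⟪hA.eigenvectorBasis i, toEuclideanLin (matFun f A) x⟫_ℂ =
      f (hA.eigenvalues i) * ⟪hA.eigenvectorBasis i, x⟫_ℂ := by
  have hcoord (y : EuclideanSpace ℂ d) : ⟪hA.eigenvectorBasis i, y⟫_ℂ =
      (star (hA.eigenvectorUnitary : Matrix d d ℂ) *ᵥ y.ofLp) i := by
    simp [PiLp.inner_apply, mulVec, dotProduct, star_apply, mul_comm]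
  rw [hcoord, hcoord, ofLp_toLpLin, toLin'_apply, matFun, dif_pos hA, mulVec_mulVec, ← mul_assoc,
    ← mul_assoc, Unitary.coe_star_mul_self, one_mul, ← mulVec_mulVec, mulVec_diagonal]

lemma inner_matFun_self {A : Matrix d d ℂ} (hA : A.IsHermitian) (f : ℝ → ℝ)
    (x : EuclideanSpace ℂ d) :
    ⟪x, toEuclideanLin (matFun f A) x⟫_ℂ =
      ((∑ i, f (hA.eigenvalues i) * ‖⟪hA.eigenvectorBasis i, x⟫_ℂ‖ ^ 2 : ℝ) : ℂ) := by
  rw [← hA.eigenvectorBasis.sum_inner_mul_inner]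
  push_cast
  refine Finset.sum_congr rfl fun i _ => ?_
  rw [inner_eigenvectorBasis_matFun, mul_left_comm, ← inner_conj_symm x, Complex.conj_mul']

lemma quadForm_matFun {A : Matrix d d ℂ} (hA : A.IsHermitian) (f : ℝ → ℝ)
    (x : EuclideanSpace ℂ d) :
    quadForm (matFun f A) x =
      ∑ i, f (hA.eigenvalues i) * ‖⟪hA.eigenvectorBasis i, x⟫_ℂ‖ ^ 2 := by
  rw [quadForm, inner_matFun_self hA, Complex.ofReal_re]

lemma quadForm_eq_sum_eigenvalues {A : Matrix d d ℂ} (hA : A.IsHermitian)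
    (x : EuclideanSpace ℂ d) :
    quadForm A x = ∑ i, hA.eigenvalues i * ‖⟪hA.eigenvectorBasis i, x⟫_ℂ‖ ^ 2 := by
  simpa only [matFun_id hA, id] using quadForm_matFun hA id x

lemma quadForm_matFun_eigenvectorBasis {A : Matrix d d ℂ} (hA : A.IsHermitian) (f : ℝ → ℝ)
    (i : d) : quadForm (matFun f A) (hA.eigenvectorBasis i) = f (hA.eigenvalues i) := by
  rw [quadForm, inner_eigenvectorBasis_matFun]
  simp

lemma quadForm_eigenvectorBasis {A : Matrix d d ℂ} (hA : A.IsHermitian) (i : d) :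
    quadForm A (hA.eigenvectorBasis i) = hA.eigenvalues i := by
  simpa only [matFun_id hA, id] using quadForm_matFun_eigenvectorBasis hA id i

lemma quadForm_matFun_inv_apply {A : Matrix d d ℂ} (hA : A.IsHermitian)
    (x : EuclideanSpace ℂ d) :
    quadForm A (toEuclideanLin (matFun (·⁻¹) A) x) = quadForm (matFun (·⁻¹) A) x := by
  rw [quadForm_eq_sum_eigenvalues hA, quadForm_matFun hA]
  refine Finset.sum_congr rfl fun i _ => ?_
  rw [inner_eigenvectorBasis_matFun, norm_mul, mul_pow, Complex.norm_real, Real.norm_eq_abs,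
    sq_abs, ← mul_assoc]
  rcases eq_or_ne (hA.eigenvalues i) 0 with hi | hi
  · simp [hi]
  · field_simp

lemma eigenvalue_mul_norm_inner_sq_le_quadForm {A : Matrix d d ℂ} (hA : A.PosSemidef) (i : d)
    (x : EuclideanSpace ℂ d) :
    hA.isHermitian.eigenvalues i * ‖⟪hA.isHermitian.eigenvectorBasis i, x⟫_ℂ‖ ^ 2 ≤
      quadForm A x := by
  rw [quadForm_eq_sum_eigenvalues hA.isHermitian]
  exact Finset.single_le_sum
    (f := fun k => hA.isHermitian.eigenvalues k * ‖⟪hA.isHermitian.eigenvectorBasis k, x⟫_ℂ‖ ^ 2)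
    (fun k _ => mul_nonneg (hA.eigenvalues_nonneg k) (sq_nonneg _)) (Finset.mem_univ i)

lemma re_trace_mul_eq_sum_eigenvalues {A : Matrix d d ℂ} (hA : A.IsHermitian)
    (B : Matrix d d ℂ) :
    (trace (A * B)).re = ∑ i, hA.eigenvalues i * quadForm B (hA.eigenvectorBasis i) := by
  have heigen (i : d) : toEuclideanLin A (hA.eigenvectorBasis i) =
      (hA.eigenvalues i : ℂ) • hA.eigenvectorBasis i := by
    rw [toLpLin_apply, hA.mulVec_eigenvectorBasis]
    rfl
  have htrace : trace (A * B) = LinearMap.trace ℂ _ (toEuclideanLin (B * A)) := by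
    rw [trace_mul_comm, toEuclideanLin_eq_toLin_orthonormal, trace_toLin_eq]
  rw [htrace, LinearMap.trace_eq_sum_inner _ hA.eigenvectorBasis, Complex.re_sum]
  refine Finset.sum_congr rfl fun i _ => ?_
  have hcomp : toEuclideanLin (B * A) (hA.eigenvectorBasis i) =
      toEuclideanLin B (toEuclideanLin A (hA.eigenvectorBasis i)) := by
    simp only [toLpLin_apply, mulVec_mulVec]
  rw [hcomp, heigen, map_smul, inner_smul_right, Complex.re_ofReal_mul, quadForm]

end Spectral

section RelativeEntropy

open scoped InnerProductSpace MatrixOrder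

lemma log_le_sum_mul_log {ι : Type*} [Fintype ι] {w b : ι → ℝ} {c : ℝ} (hc : 0 < c)
    (hw : ∀ i, 0 ≤ w i) (hw1 : ∑ i, w i = 1) (hb : ∀ i, 0 ≤ b i)
    (hwb : ∀ i, b i = 0 → w i = 0) (hcb : c * ∑ i, (b i)⁻¹ * w i ≤ 1) :
    Real.log c ≤ ∑ i, Real.log (b i) * w i := by
  have hterm (i : ι) : w i * Real.log c - Real.log (b i) * w i ≤ c * ((b i)⁻¹ * w i) - w i := by
    rcases (hb i).eq_or_lt with hbi | hbi
    · simp [hwb i hbi.symm]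
    · have hlog := Real.log_le_sub_one_of_pos (div_pos hc hbi)
      rw [Real.log_div hc.ne' hbi.ne'] at hlog
      calc w i * Real.log c - Real.log (b i) * w i
          = w i * (Real.log c - Real.log (b i)) := by ring
        _ ≤ w i * (c / b i - 1) := mul_le_mul_of_nonneg_left hlog (hw i)
        _ = c * ((b i)⁻¹ * w i) - w i := by ring
  have hsum := Finset.sum_le_sum fun i (_ : i ∈ Finset.univ) => hterm i
  rw [Finset.sum_sub_distrib, Finset.sum_sub_distrib, ← Finset.sum_mul, ← Finset.mul_sum, hw1]
    at hsum
  linarith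

lemma log_le_quadForm_mlog {σ : Matrix d d ℂ} (hσ : σ.PosSemidef) {v : EuclideanSpace ℂ d}
    (hv : ‖v‖ = 1) {c : ℝ} (hc : 0 < c) (hcσ : ∀ x, c * ‖⟪v, x⟫_ℂ‖ ^ 2 ≤ quadForm σ x) :
    Real.log c ≤ quadForm (mlog σ) v := by
  have hH := hσ.isHermitian
  have hker (i : d) (hi : hH.eigenvalues i = 0) : ‖⟪hH.eigenvectorBasis i, v⟫_ℂ‖ ^ 2 = 0 := by
    have htest := hcσ (hH.eigenvectorBasis i)
    rw [quadForm_eigenvectorBasis, hi, norm_inner_symm] at htest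
    exact le_antisymm (nonpos_of_mul_nonpos_right htest hc) (sq_nonneg _)
  have hinv : c * quadForm (matFun (·⁻¹) σ) v ≤ 1 := by
    have htest := hcσ (toEuclideanLin (matFun (·⁻¹) σ) v)
    rw [inner_matFun_self hH, ← quadForm_matFun hH, Complex.norm_real, Real.norm_eq_abs, sq_abs,
      quadForm_matFun_inv_apply hH, sq, ← mul_assoc] at htest
    by_contra! hlt
    have hpos := pos_of_mul_pos_right (one_pos.trans hlt) hc.le
    exact htest.not_gt (lt_mul_of_one_lt_left hpos hlt)
  rw [quadForm_matFun hH] at hinv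
  rw [mlog, quadForm_matFun hH]
  exact log_le_sum_mul_log hc (fun i => sq_nonneg _)
    (by rw [hH.eigenvectorBasis.sum_sq_norm_inner_right, hv, one_pow]) hσ.eigenvalues_nonneg
    hker hinv

lemma qRelEnt_eq_sum_eigenvalues {ρ : Matrix d d ℂ} (hρ : ρ.IsHermitian) (σ : Matrix d d ℂ) :
    qRelEnt ρ σ = ∑ i, hρ.eigenvalues i *
      (Real.log (hρ.eigenvalues i) - quadForm (mlog σ) (hρ.eigenvectorBasis i)) := by
  simp only [qRelEnt, mul_sub, trace_sub, Complex.sub_re, re_trace_mul_eq_sum_eigenvalues hρ,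
    Finset.sum_sub_distrib]
  simp only [mlog, quadForm_matFun_eigenvectorBasis]

lemma IsDensity.sum_eigenvalues_eq_one {ρ : Matrix d d ℂ} (hρ : IsDensity ρ) :
    ∑ i, hρ.1.isHermitian.eigenvalues i = 1 := by
  have htrace := hρ.1.isHermitian.trace_eq_sum_eigenvalues
  exact Complex.ofReal_injective (by simpa using htrace.symm.trans hρ.2)

theorem qRelEnt_le_neg_log {ρ σ : Matrix d d ℂ} (hρ : IsDensity ρ) {p : ℝ} (hp : 0 < p)
    (hρσ : p • ρ ≤ σ) : qRelEnt ρ σ ≤ -Real.log p := by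
  have hH := hρ.1.isHermitian
  have hσ : σ.PosSemidef :=
    nonneg_iff_posSemidef.mp ((nonneg_iff_posSemidef.mpr (hρ.1.smul hp.le)).trans hρσ)
  have hterm (i : d) : hH.eigenvalues i *
      (Real.log (hH.eigenvalues i) - quadForm (mlog σ) (hH.eigenvectorBasis i)) ≤
        hH.eigenvalues i * -Real.log p := by
    rcases (hρ.1.eigenvalues_nonneg i).eq_or_lt with hi | hi
    · simp [← hi]
    · have hdom (x : EuclideanSpace ℂ d) :
          p * hH.eigenvalues i * ‖⟪hH.eigenvectorBasis i, x⟫_ℂ‖ ^ 2 ≤ quadForm σ x :=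
        calc p * hH.eigenvalues i * ‖⟪hH.eigenvectorBasis i, x⟫_ℂ‖ ^ 2
            ≤ p * quadForm ρ x := by
              rw [mul_assoc]
              gcongr
              exact eigenvalue_mul_norm_inner_sq_le_quadForm hρ.1 i x
          _ ≤ quadForm σ x := quadForm_smul p ρ x ▸ quadForm_mono hρσ x
      have hlog :=
        log_le_quadForm_mlog hσ (hH.eigenvectorBasis.norm_eq_one i) (mul_pos hp hi) hdom
      rw [Real.log_mul hp.ne' hi.ne'] at hlog
      exact mul_le_mul_of_nonneg_left (by linarith) hi.le
  calc qRelEnt ρ σ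
      ≤ ∑ i, hH.eigenvalues i * -Real.log p :=
        (qRelEnt_eq_sum_eigenvalues hH σ).trans_le (Finset.sum_le_sum fun i _ => hterm i)
    _ = -Real.log p := by rw [← Finset.sum_mul, hρ.sum_eigenvalues_eq_one, one_mul]

end RelativeEntropy

section Labels

open scoped MatrixOrder

variable {S T : Type*} [Fintype S]

/-- The Holevo information `Σ_s P(s) D(out s ‖ Σ_{s'} P(s') out s')` of the ensemble of states
`out s` with weights `P s`. -/
noncomputable def holevoInfo (P : S → ℝ) (out : S → Matrix d d ℂ) : ℝ :=
  ∑ s, P s * qRelEnt (out s) (∑ s', P s' • out s')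

/-- The distribution of the label `f s` when `s` is distributed according to `P`. -/
def labelDist [DecidableEq T] (P : S → ℝ) (f : S → T) (t : T) : ℝ := ∑ s with f s = t, P s

lemma sum_mul_comp_eq_sum_labelDist [Fintype T] [DecidableEq T] (P : S → ℝ) (f : S → T)
    (g : T → ℝ) : ∑ s, P s * g (f s) = ∑ t, labelDist P f t * g t := by
  rw [← Finset.sum_fiberwise Finset.univ f]
  refine Finset.sum_congr rfl fun t _ => ?_
  rw [labelDist, Finset.sum_mul]
  exact Finset.sum_congr rfl fun s hs => by rw [(Finset.mem_filter.mp hs).2]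

lemma le_labelDist [DecidableEq T] {P : S → ℝ} (hP0 : ∀ s, 0 ≤ P s) (f : S → T) (s : S) :
    P s ≤ labelDist P f (f s) :=
  Finset.single_le_sum (f := P) (fun s' _ => hP0 s') (by simp)

lemma labelDist_smul_le_sum [DecidableEq T] {M : Type*} [AddCommMonoid M] [PartialOrder M]
    [IsOrderedAddMonoid M] [Module ℝ M] {P : S → ℝ} {x : S → M} (hPx : ∀ s, 0 ≤ P s • x s)
    {f : S → T} (hf : ∀ s s', f s = f s' → x s = x s') (s : S) :
    labelDist P f (f s) • x s ≤ ∑ s', P s' • x s' :=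
  calc labelDist P f (f s) • x s
      = ∑ s' with f s' = f s, P s' • x s' := by
        rw [labelDist, Finset.sum_smul]
        exact Finset.sum_congr rfl fun s' hs' => by rw [hf s' s (Finset.mem_filter.mp hs').2]
    _ ≤ ∑ s', P s' • x s' :=
        Finset.sum_le_sum_of_subset_of_nonneg (Finset.filter_subset _ _) fun s' _ _ => hPx s'

lemma holevoInfo_le_sum_negMulLog_labelDist [Fintype T] [DecidableEq T] {P : S → ℝ}
    (hP0 : ∀ s, 0 ≤ P s) {out : S → Matrix d d ℂ} (hout : ∀ s, IsDensity (out s))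
    {f : S → T} (hf : ∀ s s', f s = f s' → out s = out s') :
    holevoInfo P out ≤ ∑ t, Real.negMulLog (labelDist P f t) := by
  have hterm (s : S) : P s * qRelEnt (out s) (∑ s', P s' • out s') ≤
      P s * -Real.log (labelDist P f (f s)) := by
    rcases (hP0 s).eq_or_lt with hs | hs
    · simp [← hs]
    · have hdom : labelDist P f (f s) • out s ≤ ∑ s', P s' • out s' :=
        labelDist_smul_le_sum
          (fun s' => nonneg_iff_posSemidef.mpr ((hout s').1.smul (hP0 s'))) hf s
      exact mul_le_mul_of_nonneg_left
        (qRelEnt_le_neg_log (hout s) (hs.trans_le (le_labelDist hP0 f s)) hdom) hs.le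
  calc holevoInfo P out
      ≤ ∑ s, P s * -Real.log (labelDist P f (f s)) := Finset.sum_le_sum fun s _ => hterm s
    _ = ∑ t, Real.negMulLog (labelDist P f t) := by
        rw [sum_mul_comp_eq_sum_labelDist P f fun t => -Real.log (labelDist P f t)]
        simp only [Real.negMulLog, neg_mul, mul_neg]

lemma sum_negMulLog_le_log_card {ι : Type*} [Fintype ι] {w : ι → ℝ} (hw : ∀ i, 0 ≤ w i)
    (hw1 : ∑ i, w i = 1) : ∑ i, Real.negMulLog (w i) ≤ Real.log (Fintype.card ι) := by
  have : Nonempty ι := by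
    by_contra hempty
    simp [not_nonempty_iff.mp hempty] at hw1
  set N : ℝ := (Fintype.card ι : ℝ) with hN
  have hN0 : 0 < N := by positivity
  have hjensen := Real.concaveOn_negMulLog.le_map_sum (t := Finset.univ) (w := fun _ => N⁻¹)
    (p := w) (fun _ _ => by positivity) (by simp [← hN, hN0.ne']) fun i _ => hw i
  simp only [smul_eq_mul, ← Finset.mul_sum, hw1, mul_one] at hjensen
  rw [Real.negMulLog, Real.log_inv, neg_mul_neg] at hjensen
  exact le_of_mul_le_mul_left hjensen (inv_pos.mpr hN0)

theorem holevoInfo_le_log_card [Fintype T] {P : S → ℝ} (hP0 : ∀ s, 0 ≤ P s) (hP1 : ∑ s, P s = 1)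
    {out : S → Matrix d d ℂ} (hout : ∀ s, IsDensity (out s)) {f : S → T}
    (hf : ∀ s s', f s = f s' → out s = out s') :
    holevoInfo P out ≤ Real.log (Fintype.card T) := by
  classical
  have hsum : ∑ t, labelDist P f t = 1 := (Finset.sum_fiberwise Finset.univ f P).trans hP1
  exact (holevoInfo_le_sum_negMulLog_labelDist hP0 hout hf).trans
    (sum_negMulLog_le_log_card (fun _ => Finset.sum_nonneg fun s _ => hP0 s) hsum)

end Labels

section Types

variable {Z : Type*} [DecidableEq Z] {n : ℕ}

lemma typeCount_le (s : Fin n → Z) (z : Z) : typeCount s z ≤ n :=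
  (Finset.card_le_univ _).trans_eq (Fintype.card_fin n)

lemma sum_typeCount [Fintype Z] (s : Fin n → Z) : ∑ z, typeCount s z = n := by
  have hfibers := Finset.card_eq_sum_card_fiberwise (f := s) (s := Finset.univ)
    (t := Finset.univ) (by simp)
  simpa [typeCount] using hfibers.symm

/-- The type of `s` with the count of the symbol `z₀` left out. -/
def reducedType (z₀ : Z) (s : Fin n → Z) (z : {z : Z // z ≠ z₀}) : Fin (n + 1) :=
  ⟨typeCount s z, Nat.lt_succ_of_le (typeCount_le s z)⟩

lemma typeCount_eq_of_reducedType_eq [Finite Z] {z₀ : Z} {s s' : Fin n → Z}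
    (h : reducedType z₀ s = reducedType z₀ s') (z : Z) : typeCount s z = typeCount s' z := by
  cases nonempty_fintype Z
  have hne (z : Z) (hz : z ≠ z₀) : typeCount s z = typeCount s' z :=
    congrArg Fin.val (congrFun h ⟨z, hz⟩)
  rcases eq_or_ne z z₀ with rfl | hz
  · have hsum := (sum_typeCount s).trans (sum_typeCount s').symm
    rw [← Finset.add_sum_erase _ _ (Finset.mem_univ z),
      ← Finset.add_sum_erase _ _ (Finset.mem_univ z),
      Finset.sum_congr rfl fun x hx => hne x (Finset.ne_of_mem_erase hx)] at hsum
    exact Nat.add_right_cancel hsum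
  · exact hne z hz

lemma log_card_reducedType [Fintype Z] (z₀ : Z) (n : ℕ) :
    Real.log (Fintype.card ({z : Z // z ≠ z₀} → Fin (n + 1))) =
      ((Fintype.card Z : ℝ) - 1) * Real.log (n + 1) := by
  rw [Fintype.card_fun, Fintype.card_fin, Fintype.card_subtype_compl, Fintype.card_subtype_eq,
    Nat.cast_pow, Real.log_pow, Nat.cast_pred (Fintype.card_pos_iff.mpr ⟨z₀⟩), Nat.cast_succ]

end Types

/-- Type-counting stability bound: for a permutation-invariant family of
channels on length-`n` inputs over an alphabet `Z` (the output state `out s` depends only on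
the type of `s`), the Holevo information `I[S;B] = Σ_s P(s) D(out s ‖ Σ_{s'} P(s') out s')`
between the input and the output is at most `(|Z| − 1) ln(n + 1)`. -/
theorem type_counting_stability_bound
    {Z : Type*} [Fintype Z] [DecidableEq Z] [Nonempty Z] {n : ℕ}
    (P : (Fin n → Z) → ℝ) (hP0 : ∀ s, 0 ≤ P s) (hP1 : ∑ s, P s = 1)
    (out : (Fin n → Z) → Matrix d d ℂ) (hout : ∀ s, IsDensity (out s))
    (hperm : ∀ s s' : Fin n → Z, (∀ z, typeCount s z = typeCount s' z) → out s = out s') :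
    ∑ s, P s * qRelEnt (out s) (∑ s', P s' • out s') ≤
      ((Fintype.card Z : ℝ) - 1) * Real.log (n + 1) := by
  obtain ⟨z₀⟩ := ‹Nonempty Z›
  have hreduced (s s' : Fin n → Z) (h : reducedType z₀ s = reducedType z₀ s') : out s = out s' :=
    hperm s s' (typeCount_eq_of_reducedType_eq h)
  exact (holevoInfo_le_log_card hP0 hP1 hout hreduced).trans_eq (log_card_reducedType z₀ n)
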